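/- Let δ satisfy δ(j,a) = (a ∑_{i=0}^{j} 1/((a+2i)(a+1+2i)))/∏_{i=1}^{2j+1}(a+i). Then for j ≥ 2, δ(j+1, a) = ((1 + 4/c)·1/(a+2)² + 1/c)·δ(j, a+2) − (1/c)·(1/(a+4)²)·δ(j-1, a+4) + (1/c)·δ(j, a) − (1/c)·(1/(a+2)²)·δ(j-1, a+2) + (4/c)·(1/(a+2j+2)²)·δ(j, -a-2j-2), where c = (a+1)² + (a+2j+3)² + 6j + 6, as rational functions in a. -/

import Mathlib

open Finset

/-- `φ'(j, x) = ∑_{i=0}^{j} 1/((x + 2i)(x + 1 + 2i))`, as a rational function of `x`. -/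
noncomputable def phi' (j : ℕ) (x : RatFunc ℚ) : RatFunc ℚ :=
  ∑ i ∈ Finset.range (j + 1),
    1 / ((x + 2 * (i : RatFunc ℚ)) * (x + 1 + 2 * (i : RatFunc ℚ)))

/-- `δ(j, x) = (x · φ'(j, x)) / ∏_{i=1}^{2j+1}(x + i)`, as a rational function of `x`. -/
noncomputable def delta (j : ℕ) (x : RatFunc ℚ) : RatFunc ℚ :=
  x * phi' j x / ∏ i ∈ Finset.Icc 1 (2 * j + 1), (x + (i : RatFunc ℚ))

/-!
Write `D j a = ∏_{i=1}^{2j+1} (a + i)`. Peeling off the first or the last term of `φ'` and the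
matching pair of factors of `D` expresses `δ(j, a + 2)` and `δ(j, a)` through `δ(j + 1, a)` and
`1 / D (j + 1) a`. The reflection `a ↦ -a - 2j - 2` changes the sign of `D j`, and `φ'(j, ·)` at the
two points interlaces to the telescoping sum of `1 / (a + i) - 1 / (a + i + 1)`, so `δ(j, -a-2j-2)`
is expressed through `δ(j, a)` and `1 / D j a`. Hence every term of the recurrence is a combination
of `δ(j + 1, a)` and `1 / D (j + 1) a`, and it remains to compare the two coefficients.
-/

section Denominators

variable {R : Type*} [CommSemiring R]

/-- The denominator `∏_{i=1}^{2j+1} (x + i)` of `delta j x`. -/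
def deltaDenom (j : ℕ) (x : R) : R :=
  ∏ i ∈ Icc 1 (2 * j + 1), (x + (i : R))

/-- The denominator `c` of the coefficients of the recurrence for `delta`, over an arbitrary
semiring so that it can be read both as a polynomial and as a rational function. -/
def recurrenceDenom (j : ℕ) (x : R) : R :=
  (x + 1) ^ 2 + (x + 2 * (j : R) + 3) ^ 2 + 6 * (j : R) + 6

lemma deltaDenom_succ (j : ℕ) (x : R) :
    deltaDenom (j + 1) x = deltaDenom j x * ((x + 2 * j + 2) * (x + 2 * j + 3)) := by
  rw [deltaDenom, deltaDenom, show 2 * (j + 1) + 1 = 2 * j + 1 + 1 + 1 by ring,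
    prod_Icc_succ_top (by lia), prod_Icc_succ_top (by lia)]
  push_cast
  ring

lemma deltaDenom_succ' (j : ℕ) (x : R) :
    deltaDenom (j + 1) x = (x + 1) * (x + 2) * deltaDenom j (x + 2) := by
  induction j with
  | zero =>
    rw [deltaDenom_succ]
    simp only [deltaDenom, mul_zero, zero_add, Icc_self, prod_singleton]
    push_cast
    ring
  | succ j ih =>
    rw [deltaDenom_succ, ih, deltaDenom_succ]
    push_cast
    ring

lemma deltaDenom_reflect {R : Type*} [CommRing R] (j : ℕ) (x : R) :
    deltaDenom j (-x - 2 * j - 2) = -deltaDenom j x := by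
  induction j with
  | zero =>
    simp only [deltaDenom, mul_zero, zero_add, Icc_self, prod_singleton]
    push_cast
    ring
  | succ j ih =>
    have hshift : -x - 2 * (j + 1 : ℕ) - 2 + 2 = -x - 2 * j - 2 := by push_cast; ring
    rw [deltaDenom_succ', hshift, ih, deltaDenom_succ]
    push_cast
    ring

end Denominators

section Nonvanishing

variable {K : Type*} [Field K]

lemma algebraMap_ratFunc_ne_zero_of_eval_ne_zero {p : Polynomial K} {r : K} (h : p.eval r ≠ 0) :
    algebraMap (Polynomial K) (RatFunc K) p ≠ 0 :=
  RatFunc.algebraMap_ne_zero fun hp ↦ h (by rw [hp, Polynomial.eval_zero])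

lemma ratFunc_X_add_natCast_ne_zero (n : ℕ) : (RatFunc.X : RatFunc K) + n ≠ 0 := by
  have h : ((Polynomial.X : Polynomial K) + n).eval (1 - n : K) ≠ 0 := by simp
  simpa using algebraMap_ratFunc_ne_zero_of_eval_ne_zero h

lemma recurrenceDenom_ratFunc_X_ne_zero [CharZero K] (j : ℕ) :
    recurrenceDenom j (RatFunc.X : RatFunc K) ≠ 0 := by
  have h : (recurrenceDenom j (Polynomial.X : Polynomial K)).eval 0 ≠ 0 := by
    have : (1 + (2 * j + 3) ^ 2 + 6 * j + 6 : K) ≠ 0 := by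
      exact_mod_cast (by positivity : 1 + (2 * j + 3) ^ 2 + 6 * j + 6 ≠ 0)
    simpa [recurrenceDenom] using this
  simpa [recurrenceDenom, map_ofNat] using algebraMap_ratFunc_ne_zero_of_eval_ne_zero h

end Nonvanishing

lemma phi'_succ (j : ℕ) (x : RatFunc ℚ) :
    phi' (j + 1) x = phi' j x + 1 / ((x + 2 * j + 2) * (x + 2 * j + 3)) := by
  rw [phi', sum_range_succ, ← phi']
  push_cast
  ring_nf

lemma phi'_succ' (j : ℕ) (x : RatFunc ℚ) :
    phi' (j + 1) x = 1 / (x * (x + 1)) + phi' j (x + 2) := by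
  rw [phi', sum_range_succ', add_comm, phi']
  congr 1
  · simp
  · refine sum_congr rfl fun i _ ↦ ?_
    push_cast
    ring_nf

lemma phi'_reflect (j : ℕ) (x : RatFunc ℚ) :
    phi' j (-x - 2 * j - 2)
      = ∑ i ∈ range (j + 1), 1 / ((x + 2 * i + 1) * (x + 2 * i + 2)) := by
  rw [phi', ← sum_range_reflect]
  refine sum_congr rfl fun i hi ↦ ?_
  rw [Nat.add_sub_cancel, Nat.cast_sub (mem_range_succ_iff.mp hi)]
  ring_nf

lemma phi'_add_phi'_reflect {j : ℕ} {x : RatFunc ℚ}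
    (hx : ∀ i ≤ 2 * j + 2, x + (i : RatFunc ℚ) ≠ 0) :
    phi' j x + phi' j (-x - 2 * j - 2) = 1 / x - 1 / (x + 2 * j + 2) := by
  have telescope (i : ℕ) (hi : i ≤ j) :
      1 / ((x + 2 * i) * (x + 1 + 2 * i)) + 1 / ((x + 2 * i + 1) * (x + 2 * i + 2))
        = 1 / (x + 2 * i) - 1 / (x + 2 * (i + 1 : ℕ)) := by
    have h0 := hx (2 * i) (by lia)
    have h1 := hx (2 * i + 1) (by lia)
    have h2 := hx (2 * i + 2) (by lia)
    push_cast [← add_assoc] at h0 h1 h2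
    rw [add_right_comm x 1, Nat.cast_add_one, mul_add_one (2 : RatFunc ℚ), ← add_assoc]
    generalize x + 2 * (i : RatFunc ℚ) = z at *
    field_simp
    ring
  rw [phi'_reflect, phi', ← sum_add_distrib,
    sum_congr rfl fun i hi ↦ telescope i (mem_range_succ_iff.mp hi),
    sum_range_sub' fun i : ℕ ↦ 1 / (x + 2 * (i : RatFunc ℚ))]
  simp [mul_add_one, add_assoc]

lemma delta_eq_div_deltaDenom (j : ℕ) (x : RatFunc ℚ) :
    delta j x = x * phi' j x / deltaDenom j x := rfl

lemma delta_eq_delta_succ {j : ℕ} {x : RatFunc ℚ} (hy : x + 2 * j + 2 ≠ 0)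
    (hy' : x + 2 * j + 3 ≠ 0) :
    delta j x = (x + 2 * j + 2) * (x + 2 * j + 3) * delta (j + 1) x
      - x / deltaDenom (j + 1) x := by
  rw [delta_eq_div_deltaDenom, delta_eq_div_deltaDenom, phi'_succ, deltaDenom_succ]
  field_simp
  ring

lemma delta_add_two (j : ℕ) {x : RatFunc ℚ} (h₀ : x ≠ 0) (h₁ : x + 1 ≠ 0) (h₂ : x + 2 ≠ 0) :
    delta j (x + 2)
      = (x + 2) ^ 2 / x * ((x + 1) * delta (j + 1) x - 1 / deltaDenom (j + 1) x) := by
  rw [delta_eq_div_deltaDenom, delta_eq_div_deltaDenom, phi'_succ', deltaDenom_succ']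
  field_simp
  ring

lemma delta_add_four (j : ℕ) {x : RatFunc ℚ} (h₀ : x ≠ 0) (h₁ : x + 1 ≠ 0) (h₂ : x + 2 ≠ 0)
    (h₃ : x + 3 ≠ 0) (h₄ : x + 4 ≠ 0) :
    delta j (x + 4)
      = (x + 4) ^ 2 / x * ((x + 1) * (x + 2) * (x + 3) * delta (j + 2) x
        - ((x + 2) * (x + 3) + x * (x + 1)) / deltaDenom (j + 2) x) := by
  have e₃ : x + 2 + 1 = x + 3 := by ring
  have e₄ : x + 2 + 2 = x + 4 := by ring
  rw [← e₄, delta_add_two j h₂ (e₃ ▸ h₃) (e₄ ▸ h₄), delta_add_two (j + 1) h₀ h₁ h₂, e₃, e₄,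
    deltaDenom_succ' (j + 1)]
  field_simp
  ring

lemma delta_reflect {j : ℕ} {x : RatFunc ℚ} (hx : ∀ i ≤ 2 * j + 2, x + (i : RatFunc ℚ) ≠ 0) :
    delta j (-x - 2 * j - 2)
      = ((2 * j + 2) / deltaDenom j x - (x + 2 * j + 2) * delta j x) / x := by
  have h₀ : x ≠ 0 := by simpa using hx 0 (by lia)
  have hy : x + 2 * j + 2 ≠ 0 := by simpa [add_assoc] using hx (2 * j + 2) le_rfl
  rw [delta_eq_div_deltaDenom, delta_eq_div_deltaDenom, deltaDenom_reflect,
    eq_sub_of_add_eq' (phi'_add_phi'_reflect hx)]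
  field_simp
  ring

theorem stmt_14_general {j : ℕ} (hj : 1 ≤ j) {x : RatFunc ℚ}
    (hx : ∀ i ≤ 2 * j + 3, x + (i : RatFunc ℚ) ≠ 0) (hc : recurrenceDenom j x ≠ 0) :
    let c := recurrenceDenom j x
    delta (j + 1) x
      = ((1 + 4 / c) * (1 / (x + 2) ^ 2) + 1 / c) * delta j (x + 2)
        - (1 / c) * (1 / (x + 4) ^ 2) * delta (j - 1) (x + 4)
        + (1 / c) * delta j x
        - (1 / c) * (1 / (x + 2) ^ 2) * delta (j - 1) (x + 2)
        + (4 / c) * (1 / (x + 2 * j + 2) ^ 2) * delta j (-x - 2 * j - 2) := by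
  intro c
  have h₀ : x ≠ 0 := by simpa using hx 0 (by lia)
  have h₁ : x + 1 ≠ 0 := by simpa using hx 1 (by lia)
  have h₂ : x + 2 ≠ 0 := by simpa using hx 2 (by lia)
  have h₃ : x + 3 ≠ 0 := by simpa using hx 3 (by lia)
  have h₄ : x + 4 ≠ 0 := by simpa using hx 4 (by lia)
  have hy : x + 2 * j + 2 ≠ 0 := by simpa [add_assoc] using hx (2 * j + 2) (by lia)
  have hy' : x + 2 * j + 3 ≠ 0 := by simpa [add_assoc] using hx (2 * j + 3) le_rfl
  have hδ₂ := delta_add_two (j - 1) h₀ h₁ h₂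
  have hδ₄ := delta_add_four (j - 1) h₀ h₁ h₂ h₃ h₄
  rw [show j - 1 + 1 = j by lia] at hδ₂
  rw [show j - 1 + 2 = j + 1 by lia] at hδ₄
  rw [hδ₄, hδ₂, delta_add_two j h₀ h₁ h₂, delta_reflect fun i hi ↦ hx i (by lia),
    delta_eq_delta_succ hy hy']
  subst c
  rw [deltaDenom_succ]
  field_simp
  rw [recurrenceDenom]
  ring

/-- For `j ≥ 2`, with `c = (a+1)² + (a+2j+3)² + 6j + 6`,
`δ(j+1, a) = ((1 + 4/c)/(a+2)² + 1/c)·δ(j, a+2) − (1/c)(1/(a+4)²)·δ(j-1, a+4) + (1/c)·δ(j, a)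
  − (1/c)(1/(a+2)²)·δ(j-1, a+2) + (4/c)(1/(a+2j+2)²)·δ(j, -a-2j-2)`,
as rational functions in `a`. -/
theorem stmt_14 (j : ℕ) (hj : 2 ≤ j) :
    let X : RatFunc ℚ := RatFunc.X
    let c : RatFunc ℚ := (X + 1) ^ 2 + (X + 2 * (j : RatFunc ℚ) + 3) ^ 2
        + 6 * (j : RatFunc ℚ) + 6
    delta (j + 1) X
      = ((1 + 4 / c) * (1 / (X + 2) ^ 2) + 1 / c) * delta j (X + 2)
        - (1 / c) * (1 / (X + 4) ^ 2) * delta (j - 1) (X + 4)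
        + (1 / c) * delta j X
        - (1 / c) * (1 / (X + 2) ^ 2) * delta (j - 1) (X + 2)
        + (4 / c) * (1 / (X + 2 * (j : RatFunc ℚ) + 2) ^ 2)
            * delta j (-X - 2 * (j : RatFunc ℚ) - 2) :=
  stmt_14_general (by lia) (fun i _ ↦ ratFunc_X_add_natCast_ne_zero (K := ℚ) i)
    (recurrenceDenom_ratFunc_X_ne_zero (K := ℚ) j)
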